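/- Under the quadratic predictor–corrector setup (see context), there exist h₀ > 0 and a constant C, both depending only on α, M, L, T, y and f but not on the grid, such that for all 0 < h ≤ h₀ and all 2 ≤ n ≤ N the predictor error satisfies |Eᴾₙ₊₁| ≤ 2βh |E_{1/2}| + (2L(1−α)/M)(|Eₙ₋₂| + 3|Eₙ₋₁| + 3|Eₙ|) + 6βh Σ_{j=1}^{n} |E_j| + C h³. -/

import Mathlib

open Real MeasureTheory Finset

/-- Quadratic Lagrange basis polynomial at node `a` with other nodes `b, c`. -/
noncomputable def lagBasis (a b c s : ℝ) : ℝ :=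
  ((s - b) * (s - c)) / ((a - b) * (a - c))

/-- Weight `A⁰ʲₙ₊₁` (basis at `t_{j-1}`) of the quadratic scheme, `j ≥ 1`. -/
noncomputable def quadA0 (β h : ℝ) (n j : ℕ) : ℝ :=
  ∫ s in ((j : ℝ) * h)..(((j : ℝ) + 1) * h),
    lagBasis (((j : ℝ) - 1) * h) ((j : ℝ) * h) (((j : ℝ) + 1) * h) s
      * Real.exp (-β * (((n : ℝ) + 1) * h - s))

/-- Weight `A¹ʲₙ₊₁` (basis at `t_j`) of the quadratic scheme, `j ≥ 1`. -/
noncomputable def quadA1 (β h : ℝ) (n j : ℕ) : ℝ :=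
  ∫ s in ((j : ℝ) * h)..(((j : ℝ) + 1) * h),
    lagBasis ((j : ℝ) * h) (((j : ℝ) - 1) * h) (((j : ℝ) + 1) * h) s
      * Real.exp (-β * (((n : ℝ) + 1) * h - s))

/-- Weight `A²ʲₙ₊₁` (basis at `t_{j+1}`) of the quadratic scheme, `j ≥ 1`. -/
noncomputable def quadA2 (β h : ℝ) (n j : ℕ) : ℝ :=
  ∫ s in ((j : ℝ) * h)..(((j : ℝ) + 1) * h),
    lagBasis (((j : ℝ) + 1) * h) (((j : ℝ) - 1) * h) ((j : ℝ) * h) s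
      * Real.exp (-β * (((n : ℝ) + 1) * h - s))

/-- Weight `A^{0,0}ₙ₊₁` (basis at `t₀ = 0`, nodes `0, h/2, h`) of the quadratic scheme. -/
noncomputable def quadA00 (β h : ℝ) (n : ℕ) : ℝ :=
  ∫ s in (0 : ℝ)..h, lagBasis 0 (h / 2) h s * Real.exp (-β * (((n : ℝ) + 1) * h - s))

/-- Weight `A^{1,0}ₙ₊₁` (basis at `t_{1/2} = h/2`) of the quadratic scheme. -/
noncomputable def quadA10 (β h : ℝ) (n : ℕ) : ℝ :=
  ∫ s in (0 : ℝ)..h, lagBasis (h / 2) 0 h s * Real.exp (-β * (((n : ℝ) + 1) * h - s))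

/-- Weight `A^{2,0}ₙ₊₁` (basis at `t₁ = h`) of the quadratic scheme. -/
noncomputable def quadA20 (β h : ℝ) (n : ℕ) : ℝ :=
  ∫ s in (0 : ℝ)..h, lagBasis h 0 (h / 2) s * Real.exp (-β * (((n : ℝ) + 1) * h - s))


lemma aux_taylor (T : ℝ) (F : ℝ → ℝ) (hF : ContDiffOn ℝ 3 F (Set.Icc 0 T)) (hT : 0 < T) :
    ∃ K : ℝ, 0 ≤ K ∧ ∀ a, 0 ≤ a → a < T → ∃ c0 c1 c2 : ℝ, ∀ x ∈ Set.Icc a T,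
      |F x - (c0 + c1 * (x - a) + c2 * (x - a) ^ 2)| ≤ K * (x - a) ^ 3 := by
  have hcont : ContinuousOn (iteratedDerivWithin 3 F (Set.Icc 0 T)) (Set.Icc 0 T) :=
    hF.continuousOn_iteratedDerivWithin (by norm_num) (uniqueDiffOn_Icc hT)
  obtain ⟨K, hK⟩ := isCompact_Icc.exists_bound_of_continuousOn hcont
  have hK0 : 0 ≤ K := (norm_nonneg _).trans (hK 0 ⟨le_rfl, hT.le⟩)
  refine ⟨K, hK0, fun a ha haT => ?_⟩
  have hsub : Set.Icc a T ⊆ Set.Icc 0 T := Set.Icc_subset_Icc_left ha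
  refine ⟨F a, iteratedDerivWithin 1 F (Set.Icc a T) a,
    iteratedDerivWithin 2 F (Set.Icc a T) a / 2, fun x hx => ?_⟩
  have h := taylor_mean_remainder_bound (n := 2) (C := K) haT.le
    (by norm_num; exact hF.mono hsub) hx (fun z hz => by
      have : iteratedDerivWithin 3 F (Set.Icc a T) z
          = iteratedDerivWithin 3 F (Set.Icc 0 T) z := by
        simp only [iteratedDerivWithin]
        rw [iteratedFDerivWithin_subset hsub (uniqueDiffOn_Icc haT) (uniqueDiffOn_Icc hT) hF hz]
      simpa [this] using hK z (hsub hz))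
  rw [taylorWithinEval_succ, taylorWithinEval_succ, taylor_within_zero_eval] at h
  have hx3 : 0 ≤ K * (x - a) ^ 3 := mul_nonneg hK0 (pow_nonneg (by linarith [hx.1]) 3)
  norm_num [Real.norm_eq_abs, Nat.factorial] at h
  refine le_trans (le_of_eq_of_le ?_ h) (by linarith)
  congr 1
  simp only [iteratedDerivWithin_one]
  ring

lemma aux_basis (p0 p1 p2 δ s : ℝ) (hδ : 0 < δ) (h1 : p1 = p0 + δ) (h2 : p2 = p0 + 2 * δ)
    (hs : s ∈ Set.Icc p0 p2) :
    |lagBasis p0 p1 p2 s| ≤ 1 ∧ |lagBasis p1 p0 p2 s| ≤ 1 ∧ |lagBasis p2 p0 p1 s| ≤ 1 := by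
  subst h1 h2
  obtain ⟨θ, rfl⟩ : ∃ θ, s = p0 + θ * δ := ⟨(s - p0) / δ, by field_simp; ring⟩
  have hθ0 : 0 ≤ θ := by
    have := hs.1
    by_contra hc
    nlinarith
  have hθ2 : θ ≤ 2 := by
    have := hs.2
    by_contra hc
    nlinarith
  have e0 : lagBasis p0 (p0 + δ) (p0 + 2 * δ) (p0 + θ * δ) = (θ - 1) * (θ - 2) / 2 := by
    unfold lagBasis
    rw [show (p0 - (p0 + δ)) * (p0 - (p0 + 2 * δ)) = 2 * δ ^ 2 by ring]
    field_simp
    ring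
  have e1 : lagBasis (p0 + δ) p0 (p0 + 2 * δ) (p0 + θ * δ) = θ * (2 - θ) := by
    unfold lagBasis
    rw [show (p0 + δ - p0) * (p0 + δ - (p0 + 2 * δ)) = - δ ^ 2 by ring]
    field_simp
    ring
  have e2 : lagBasis (p0 + 2 * δ) p0 (p0 + δ) (p0 + θ * δ) = θ * (θ - 1) / 2 := by
    unfold lagBasis
    rw [show (p0 + 2 * δ - p0) * (p0 + 2 * δ - (p0 + δ)) = 2 * δ ^ 2 by ring]
    field_simp
    ring
  rw [e0, e1, e2]
  refine ⟨abs_le.2 ⟨?_, ?_⟩, abs_le.2 ⟨?_, ?_⟩, abs_le.2 ⟨?_, ?_⟩⟩ <;>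
    nlinarith [mul_nonneg hθ0 (sub_nonneg.2 hθ2), sq_nonneg (θ - 1), sq_nonneg (θ - 3 / 2),
      sq_nonneg (θ - 1 / 2)]

lemma aux_interp (F : ℝ → ℝ) (K c0 c1 c2 p0 p1 p2 δ s : ℝ) (hK : 0 ≤ K) (hδ : 0 < δ)
    (h1 : p1 = p0 + δ) (h2 : p2 = p0 + 2 * δ) (hs : s ∈ Set.Icc p0 p2)
    (hF : ∀ x ∈ Set.Icc p0 p2,
      |F x - (c0 + c1 * (x - p0) + c2 * (x - p0) ^ 2)| ≤ K * (x - p0) ^ 3) :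
    |F s - (lagBasis p0 p1 p2 s * F p0 + lagBasis p1 p0 p2 s * F p1
      + lagBasis p2 p0 p1 s * F p2)| ≤ 32 * K * δ ^ 3 := by
  obtain ⟨b0, b1, b2⟩ := aux_basis p0 p1 p2 δ s hδ h1 h2 hs
  have hb : ∀ x ∈ Set.Icc p0 p2,
      |F x - (c0 + c1 * (x - p0) + c2 * (x - p0) ^ 2)| ≤ 8 * K * δ ^ 3 := by
    intro x hx
    refine (hF x hx).trans ?_
    have : (x - p0) ^ 3 ≤ (2 * δ) ^ 3 :=
      pow_le_pow_left₀ (by linarith [hx.1]) (by linarith [hx.2]) 3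
    calc K * (x - p0) ^ 3 ≤ K * (2 * δ) ^ 3 := mul_le_mul_of_nonneg_left this hK
      _ = _ := by ring
  set R : ℝ → ℝ := fun x => F x - (c0 + c1 * (x - p0) + c2 * (x - p0) ^ 2) with hR
  have key : F s - (lagBasis p0 p1 p2 s * F p0 + lagBasis p1 p0 p2 s * F p1
      + lagBasis p2 p0 p1 s * F p2) = R s - lagBasis p0 p1 p2 s * R p0
      - lagBasis p1 p0 p2 s * R p1 - lagBasis p2 p0 p1 s * R p2 := by
    simp only [hR]
    subst h1 h2
    unfold lagBasis
    rw [show (p0 - (p0 + δ)) * (p0 - (p0 + 2 * δ)) = 2 * δ ^ 2 by ring,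
      show (p0 + δ - p0) * (p0 + δ - (p0 + 2 * δ)) = - δ ^ 2 by ring,
      show (p0 + 2 * δ - p0) * (p0 + 2 * δ - (p0 + δ)) = 2 * δ ^ 2 by ring]
    field_simp
    ring
  rw [key]
  have m : ∀ l x : ℝ, |l| ≤ 1 → x ∈ Set.Icc p0 p2 → |l * R x| ≤ 8 * K * δ ^ 3 := by
    intro l x hl hx
    rw [abs_mul]
    calc |l| * |R x| ≤ 1 * (8 * K * δ ^ 3) :=
          mul_le_mul hl (hb x hx) (abs_nonneg _) zero_le_one
      _ = _ := one_mul _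
  have r := hb s hs
  have m0 := m _ p0 b0 ⟨le_rfl, by linarith⟩
  have m1 := m _ p1 b1 ⟨by linarith, by linarith⟩
  have m2 := m _ p2 b2 ⟨by linarith, by linarith⟩
  change |R s| ≤ _ at r
  rw [abs_le] at *
  constructor <;> linarith [r.1, r.2, m0.1, m0.2, m1.1, m1.2, m2.1, m2.2]

lemma aux_lag_cont (a b c : ℝ) : Continuous (lagBasis a b c) := by
  unfold lagBasis
  fun_prop

lemma aux_weight (l w : ℝ → ℝ) (p q : ℝ) (hpq : p ≤ q)
    (hl : ∀ s ∈ Set.Icc p q, |l s| ≤ 1) (hw : ∀ s ∈ Set.Icc p q, |w s| ≤ 1) :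
    |∫ s in p..q, l s * w s| ≤ q - p := by
  have := intervalIntegral.norm_integral_le_of_norm_le_const (a := p) (b := q) (C := 1)
    (f := fun s => l s * w s) (fun s hs => by
      rw [Set.uIoc_of_le hpq] at hs
      have hs' := Set.Ioc_subset_Icc_self hs
      rw [Real.norm_eq_abs, abs_mul]
      exact mul_le_one₀ (hl s hs') (abs_nonneg _) (hw s hs'))
  rwa [Real.norm_eq_abs, one_mul, abs_of_nonneg (sub_nonneg.2 hpq)] at this

lemma aux_local (F w : ℝ → ℝ) (K p0 p1 p2 δ p q T : ℝ) (hK : 0 ≤ K) (hδ : 0 < δ)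
    (h1 : p1 = p0 + δ) (h2 : p2 = p0 + 2 * δ) (hpq : p ≤ q) (hp : p0 ≤ p) (hq : q ≤ p2)
    (h0 : 0 ≤ p0) (hT : p2 ≤ T) (hFc : ContinuousOn F (Set.Icc 0 T)) (hwc : Continuous w)
    (hw : ∀ s ∈ Set.Icc p q, |w s| ≤ 1)
    (hF : ∀ a, 0 ≤ a → a < T → ∃ c0 c1 c2 : ℝ, ∀ x ∈ Set.Icc a T,
      |F x - (c0 + c1 * (x - a) + c2 * (x - a) ^ 2)| ≤ K * (x - a) ^ 3) :
    |(∫ s in p..q, F s * w s) - ((∫ s in p..q, lagBasis p0 p1 p2 s * w s) * F p0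
      + (∫ s in p..q, lagBasis p1 p0 p2 s * w s) * F p1
      + (∫ s in p..q, lagBasis p2 p0 p1 s * w s) * F p2)| ≤ 32 * K * δ ^ 3 * (q - p) := by
  obtain ⟨c0, c1, c2, hc⟩ := hF p0 h0 (by linarith)
  have iF : IntervalIntegrable (fun s => F s * w s) volume p q := by
    apply ContinuousOn.intervalIntegrable_of_Icc hpq
    exact (hFc.mono (Set.Icc_subset_Icc (by linarith) (by linarith))).mul hwc.continuousOn
  have il : ∀ a b c d, IntervalIntegrable (fun s => lagBasis a b c s * w s * d) volume p q :=
    fun a b c d => (((aux_lag_cont a b c).mul hwc).mul continuous_const).intervalIntegrable _ _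
  rw [← intervalIntegral.integral_mul_const, ← intervalIntegral.integral_mul_const,
    ← intervalIntegral.integral_mul_const, ← intervalIntegral.integral_add (il _ _ _ _) (il _ _ _ _),
    ← intervalIntegral.integral_add ((il _ _ _ _).add (il _ _ _ _)) (il _ _ _ _),
    ← intervalIntegral.integral_sub iF (((il _ _ _ _).add (il _ _ _ _)).add (il _ _ _ _))]
  have := intervalIntegral.norm_integral_le_of_norm_le_const (a := p) (b := q)
    (C := 32 * K * δ ^ 3)
    (f := fun s => F s * w s - (lagBasis p0 p1 p2 s * w s * F p0 + lagBasis p1 p0 p2 s * w s * F p1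
      + lagBasis p2 p0 p1 s * w s * F p2)) (fun s hs => by
      rw [Set.uIoc_of_le hpq] at hs
      have hs' := Set.Ioc_subset_Icc_self hs
      have hh := aux_interp F K c0 c1 c2 p0 p1 p2 δ s hK hδ h1 h2
        ⟨by linarith [hs'.1], by linarith [hs'.2]⟩
        (fun x hx => hc x ⟨hx.1, hx.2.trans hT⟩)
      rw [Real.norm_eq_abs]
      rw [show F s * w s - (lagBasis p0 p1 p2 s * w s * F p0 + lagBasis p1 p0 p2 s * w s * F p1
        + lagBasis p2 p0 p1 s * w s * F p2) = (F s - (lagBasis p0 p1 p2 s * F p0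
        + lagBasis p1 p0 p2 s * F p1 + lagBasis p2 p0 p1 s * F p2)) * w s by ring, abs_mul]
      calc _ ≤ (32 * K * δ ^ 3) * 1 :=
            mul_le_mul hh (hw s hs') (abs_nonneg _) ((abs_nonneg _).trans hh)
        _ = _ := mul_one _)
  rwa [Real.norm_eq_abs, abs_of_nonneg (sub_nonneg.2 hpq)] at this

lemma aux_third (F : ℝ → ℝ) (K T a h : ℝ) (hh : 0 < h) (h0 : 0 ≤ a)
    (hT : a + 3 * h ≤ T)
    (hF : ∀ a, 0 ≤ a → a < T → ∃ c0 c1 c2 : ℝ, ∀ x ∈ Set.Icc a T,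
      |F x - (c0 + c1 * (x - a) + c2 * (x - a) ^ 2)| ≤ K * (x - a) ^ 3) :
    |F (a + 3 * h) - (F a - 3 * F (a + h) + 3 * F (a + 2 * h))| ≤ 54 * K * h ^ 3 := by
  obtain ⟨c0, c1, c2, hc⟩ := hF a h0 (by linarith)
  have r0 := abs_le.1 (hc a ⟨by linarith, by linarith⟩)
  have r1 := abs_le.1 (hc (a + h) ⟨by linarith, by linarith⟩)
  have r2 := abs_le.1 (hc (a + 2 * h) ⟨by linarith, by linarith⟩)
  have r3 := abs_le.1 (hc (a + 3 * h) ⟨by linarith, by linarith⟩)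
  ring_nf at r0 r1 r2 r3 ⊢
  rw [abs_le]
  constructor <;> linarith [r0.1, r0.2, r1.1, r1.2, r2.1, r2.2, r3.1, r3.2]

lemma aux_sum (e : ℕ → ℝ) (he : e 0 = 0) (m : ℕ) :
    (∑ j ∈ Finset.Icc 1 m, (|e (j - 1)| + |e j| + |e (j + 1)|)) + |e m| + |e (m + 1)| + |e 1|
      = 3 * (∑ j ∈ Finset.Icc 1 (m + 1), |e j|) - |e (m + 1)| := by
  induction m with
  | zero => simp [he]; ring
  | succ m ih =>
    rw [Finset.sum_Icc_succ_top (by omega), Finset.sum_Icc_succ_top (by omega : 1 ≤ m + 1 + 1)]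
    simp only [Nat.add_sub_cancel]
    linarith

lemma aux_sum_bound (e a0 a1 a2 : ℕ → ℝ) (b h : ℝ) (he : e 0 = 0) (m : ℕ)
    (h0 : ∀ j, 1 ≤ j → j ≤ m + 1 → |a0 j| ≤ h) (h1 : ∀ j, 1 ≤ j → j ≤ m + 1 → |a1 j| ≤ h)
    (h2 : ∀ j, 1 ≤ j → j ≤ m + 1 → |a2 j| ≤ h) (hb : |b| ≤ h) :
    |(∑ j ∈ Finset.Icc 1 m, (a0 j * e (j - 1) + a1 j * e j + a2 j * e (j + 1)))
      + a0 (m + 1) * e m + a1 (m + 1) * e (m + 1) + b * e 1|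
      ≤ 3 * h * ∑ j ∈ Finset.Icc 1 (m + 1), |e j| := by
  have mm : ∀ x z : ℝ, |x| ≤ h → |x * z| ≤ h * |z| := fun x z hx => by
    rw [abs_mul]; exact mul_le_mul_of_nonneg_right hx (abs_nonneg _)
  have hh : 0 ≤ h := (abs_nonneg _).trans hb
  have s : |∑ j ∈ Finset.Icc 1 m, (a0 j * e (j - 1) + a1 j * e j + a2 j * e (j + 1))|
      ≤ h * ∑ j ∈ Finset.Icc 1 m, (|e (j - 1)| + |e j| + |e (j + 1)|) := by
    rw [Finset.mul_sum]
    refine (Finset.abs_sum_le_sum_abs _ _).trans (Finset.sum_le_sum fun j hj => ?_)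
    rw [Finset.mem_Icc] at hj
    have := mm _ (e (j - 1)) (h0 j hj.1 (by omega))
    have := mm _ (e j) (h1 j hj.1 (by omega))
    have := mm _ (e (j + 1)) (h2 j hj.1 (by omega))
    refine (abs_add_three _ _ _).trans ?_
    linarith
  have u0 := mm _ (e m) (h0 (m + 1) (by omega) le_rfl)
  have u1 := mm _ (e (m + 1)) (h1 (m + 1) (by omega) le_rfl)
  have u2 := mm _ (e 1) hb
  have id := congrArg (fun z => h * z) (aux_sum e he m)
  have nn := mul_nonneg hh (abs_nonneg (e (m + 1)))
  rw [abs_le] at *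
  constructor <;> linarith [s.1, s.2, u0.1, u0.2, u1.1, u1.2, u2.1, u2.2]

/-- Predictor error bound of the quadratic-interpolation predictor–corrector scheme:
`|Eᴾₙ₊₁| ≤ 2βh|E_{1/2}| + (2L(1-α)/M)(|Eₙ₋₂| + 3|Eₙ₋₁| + 3|Eₙ|) + 6βh Σ_{j=1}^n |E_j| + Ch³`. -/
theorem quadratic_predictor_error
    (α β M T L y₀ : ℝ) (f : ℝ → ℝ → ℝ) (y : ℝ → ℝ)
    (hα : α ∈ Set.Ioo (0 : ℝ) 1) (hβ : β = α / (1 - α)) (hM : 0 < M) (hT : 0 < T)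
    (hL : 0 ≤ L)
    (hf : ∀ t ∈ Set.Icc (0 : ℝ) T, ∀ u₁ u₂ : ℝ, |f t u₁ - f t u₂| ≤ L * |u₁ - u₂|)
    (hy : ContDiffOn ℝ 3 y (Set.Icc 0 T)) (hy0 : y 0 = y₀)
    (hfy : ContDiffOn ℝ 3 (fun t => f t (y t)) (Set.Icc 0 T))
    (hint : ∀ t ∈ Set.Icc (0 : ℝ) T,
      y t = ((1 - α) / M) * f t (y t) + y₀ * Real.exp (-β * t)
        + β * ∫ s in (0 : ℝ)..t, y s * Real.exp (-β * (t - s))) :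
    ∃ h₀ > (0 : ℝ), ∃ C : ℝ,
      ∀ (N : ℕ) (h : ℝ), h = T / (N + 1) → h ≤ h₀ →
        ∀ (yseq yp : ℕ → ℝ) (yhalf : ℝ),
          yseq 0 = y₀ →
          (∀ n, 2 ≤ n → n ≤ N →
            -- predictor
            (1 - β * quadA2 β h n n) * yp (n + 1)
              = (((1 - α) / M) * (f ((↑(n - 2) : ℝ) * h) (yseq (n - 2))
                    - 3 * f ((↑(n - 1) : ℝ) * h) (yseq (n - 1))
                    + 3 * f ((n : ℝ) * h) (yseq n))
                  + y₀ * Real.exp (-β * (((n : ℝ) + 1) * h)))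
                + β * (quadA00 β h n * yseq 0 + quadA10 β h n * yhalf
                    + quadA20 β h n * yseq 1)
                + β * ((∑ j ∈ Finset.Icc 1 (n - 1),
                      (quadA0 β h n j * yseq (j - 1) + quadA1 β h n j * yseq j
                        + quadA2 β h n j * yseq (j + 1)))
                    + quadA0 β h n n * yseq (n - 1) + quadA1 β h n n * yseq n) ∧
            -- corrector
            (1 - β * quadA2 β h n n) * yseq (n + 1)
              = (((1 - α) / M) * f (((n : ℝ) + 1) * h) (yp (n + 1))
                  + y₀ * Real.exp (-β * (((n : ℝ) + 1) * h)))
                + β * (quadA00 β h n * yseq 0 + quadA10 β h n * yhalf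
                    + quadA20 β h n * yseq 1)
                + β * ((∑ j ∈ Finset.Icc 1 (n - 1),
                      (quadA0 β h n j * yseq (j - 1) + quadA1 β h n j * yseq j
                        + quadA2 β h n j * yseq (j + 1)))
                    + quadA0 β h n n * yseq (n - 1) + quadA1 β h n n * yseq n)) →
          ∀ n, 2 ≤ n → n ≤ N →
            |y (((n : ℝ) + 1) * h) - yp (n + 1)|
              ≤ 2 * β * h * |y (h / 2) - yhalf|
                + (2 * L * (1 - α) / M)
                    * (|y ((↑(n - 2) : ℝ) * h) - yseq (n - 2)|
                      + 3 * |y ((↑(n - 1) : ℝ) * h) - yseq (n - 1)|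
                      + 3 * |y ((n : ℝ) * h) - yseq n|)
                + 6 * β * h * (∑ j ∈ Finset.Icc 1 n, |y ((j : ℝ) * h) - yseq j|)
                + C * h ^ 3 := by

  obtain ⟨hα0, hα1⟩ := hα
  have hβ0 : 0 < β := by rw [hβ]; exact div_pos hα0 (by linarith)
  obtain ⟨K1, hK1, hy3⟩ := aux_taylor T y hy hT
  obtain ⟨K2, hK2, hF3⟩ := aux_taylor T _ hfy hT
  set c : ℝ := (1 - α) / M with hc
  have hc0 : 0 ≤ c := div_nonneg (by linarith) hM.le
  refine ⟨1 / (2 * β), by positivity, 2 * (c * (54 * K2) + β * (32 * K1 * T)), ?_⟩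
  intro N h hh hh0 yseq yp yhalf hy00 hsch n hn2 hnN
  obtain ⟨hpred, -⟩ := hsch n hn2 hnN
  clear hsch
  have hN : (0 : ℝ) < (N : ℝ) + 1 := by positivity
  have hpos : 0 < h := by rw [hh]; positivity
  have hNT : ((N : ℝ) + 1) * h = T := by rw [hh]; field_simp
  have hβh : β * h ≤ 1 / 2 := by
    calc β * h ≤ β * (1 / (2 * β)) := mul_le_mul_of_nonneg_left hh0 hβ0.le
      _ = 1 / 2 := by field_simp
  have hnT : ((n : ℝ) + 1) * h ≤ T := by
    rw [← hNT]
    have : (n : ℝ) ≤ N := by exact_mod_cast hnN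
    exact mul_le_mul_of_nonneg_right (by linarith) hpos.le
  obtain ⟨k, rfl⟩ : ∃ k, n = k + 2 := ⟨n - 2, by omega⟩
  set w : ℝ → ℝ := fun s => Real.exp (-β * (((((k + 2 : ℕ) : ℝ)) + 1) * h - s)) with hwdef
  have hwc : Continuous w := by simp only [hwdef]; fun_prop
  have hw : ∀ s, s ≤ (((k + 2 : ℕ) : ℝ) + 1) * h → |w s| ≤ 1 := by
    intro s hs
    simp only [hwdef]
    rw [abs_of_pos (Real.exp_pos _), Real.exp_le_one_iff]
    have := mul_nonneg hβ0.le (sub_nonneg.2 hs)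
    linarith
  have hjn : ∀ j : ℕ, j ≤ k + 2 → ((j : ℝ) + 1) * h ≤ (((k + 2 : ℕ) : ℝ) + 1) * h := by
    intro j hj
    have : (j : ℝ) ≤ ((k + 2 : ℕ) : ℝ) := by exact_mod_cast hj
    exact mul_le_mul_of_nonneg_right (by linarith) hpos.le
  have hyc := hy.continuousOn
  -- weight bounds
  have hbas : ∀ j : ℕ, ∀ s ∈ Set.Icc ((j : ℝ) * h) (((j : ℝ) + 1) * h), _ := fun j s hs =>
    aux_basis (((j : ℝ) - 1) * h) ((j : ℝ) * h) (((j : ℝ) + 1) * h) h s hpos (by ring) (by ring)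
      ⟨by linarith [hs.1], hs.2⟩
  have hlen : ∀ j : ℕ, ((j : ℝ) + 1) * h - (j : ℝ) * h = h := fun j => by ring
  have hA0 : ∀ j, 1 ≤ j → j ≤ k + 1 + 1 → |quadA0 β h (k + 2) j| ≤ h := fun j _ hj => by
    have := aux_weight _ w _ _ (by linarith [hlen j]) (fun s hs => (hbas j s hs).1)
      (fun s hs => hw s (hs.2.trans (hjn j hj)))
    rwa [hlen] at this
  have hA1 : ∀ j, 1 ≤ j → j ≤ k + 1 + 1 → |quadA1 β h (k + 2) j| ≤ h := fun j _ hj => by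
    have := aux_weight _ w _ _ (by linarith [hlen j]) (fun s hs => (hbas j s hs).2.1)
      (fun s hs => hw s (hs.2.trans (hjn j hj)))
    rwa [hlen] at this
  have hA2 : ∀ j, 1 ≤ j → j ≤ k + 1 + 1 → |quadA2 β h (k + 2) j| ≤ h := fun j _ hj => by
    have := aux_weight _ w _ _ (by linarith [hlen j]) (fun s hs => (hbas j s hs).2.2)
      (fun s hs => hw s (hs.2.trans (hjn j hj)))
    rwa [hlen] at this
  have hbas0 : ∀ s ∈ Set.Icc (0 : ℝ) h, _ := fun s hs =>
    aux_basis 0 (h / 2) h (h / 2) s (by linarith) (by ring) (by ring) hs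
  have hh1 : h ≤ (((k + 2 : ℕ) : ℝ) + 1) * h := by simpa using hjn 0 (by omega)
  have hA10 : |quadA10 β h (k + 2)| ≤ h := by
    have := aux_weight _ w _ _ hpos.le (fun s hs => (hbas0 s hs).2.1)
      (fun s hs => hw s (hs.2.trans hh1))
    rwa [sub_zero] at this
  have hA20 : |quadA20 β h (k + 2)| ≤ h := by
    have := aux_weight _ w _ _ hpos.le (fun s hs => (hbas0 s hs).2.2)
      (fun s hs => hw s (hs.2.trans hh1))
    rwa [sub_zero] at this
  -- truncation
  have hR0 : |(∫ s in (0 : ℝ)..h, y s * w s) - (quadA00 β h (k + 2) * y 0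
      + quadA10 β h (k + 2) * y (h / 2) + quadA20 β h (k + 2) * y h)|
      ≤ 32 * K1 * h ^ 3 * h := by
    have := aux_local y w K1 0 (h / 2) h (h / 2) 0 h T hK1 (by linarith) (by ring) (by ring)
      hpos.le le_rfl le_rfl le_rfl (hh1.trans hnT) hyc hwc
      (fun s hs => hw s (hs.2.trans hh1)) hy3
    refine this.trans ?_
    rw [sub_zero]
    have : 0 ≤ K1 * h ^ 3 * h := by positivity
    ring_nf at this ⊢
    linarith
  have hRj : ∀ j : ℕ, 1 ≤ j → j ≤ k + 2 →
      |(∫ s in ((j : ℝ) * h)..(((j : ℝ) + 1) * h), y s * w s)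
        - (quadA0 β h (k + 2) j * y (((j - 1 : ℕ) : ℝ) * h)
          + quadA1 β h (k + 2) j * y ((j : ℝ) * h)
          + quadA2 β h (k + 2) j * y (((j + 1 : ℕ) : ℝ) * h))| ≤ 32 * K1 * h ^ 3 * h := by
    intro j hj1 hj2
    have hj1' : (1 : ℝ) ≤ j := by exact_mod_cast hj1
    have := aux_local y w K1 (((j : ℝ) - 1) * h) ((j : ℝ) * h) (((j : ℝ) + 1) * h) h
      ((j : ℝ) * h) (((j : ℝ) + 1) * h) T hK1 hpos (by ring) (by ring)
      (by linarith [hlen j]) (by linarith) le_rfl (mul_nonneg (by linarith) hpos.le)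
      ((hjn j hj2).trans hnT) hyc hwc
      (fun s hs => hw s (hs.2.trans (hjn j hj2))) hy3
    rw [hlen] at this
    push_cast [Nat.cast_sub hj1]
    exact this
  have hsplit : ∀ m : ℕ, m ≤ k + 2 →
      |(∫ s in (0 : ℝ)..(((m : ℝ) + 1) * h), y s * w s) - ((quadA00 β h (k + 2) * y 0
      + quadA10 β h (k + 2) * y (h / 2) + quadA20 β h (k + 2) * y h)
      + ∑ j ∈ Finset.Icc 1 m, (quadA0 β h (k + 2) j * y (((j - 1 : ℕ) : ℝ) * h)
          + quadA1 β h (k + 2) j * y ((j : ℝ) * h)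
          + quadA2 β h (k + 2) j * y (((j + 1 : ℕ) : ℝ) * h)))|
      ≤ 32 * K1 * h ^ 3 * (((m : ℝ) + 1) * h) := by
    intro m
    induction m with
    | zero => intro _; simpa using hR0
    | succ m ih =>
      intro hm
      have i1 := ih (by omega)
      have i2 := hRj (m + 1) (by omega) hm
      rw [Finset.sum_Icc_succ_top (by omega)]
      have hii : ∀ a b : ℝ, 0 ≤ a → a ≤ b → b ≤ T →
          IntervalIntegrable (fun s => y s * w s) volume a b := fun a b ha hab hb => by
        apply ContinuousOn.intervalIntegrable_of_Icc hab
        exact (hyc.mono (Set.Icc_subset_Icc ha hb)).mul hwc.continuousOn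
      have hm1 := (hjn (m + 1) hm).trans hnT
      have hl := hlen (m + 1)
      have hm0 : 0 ≤ (((m + 1 : ℕ) : ℝ)) * h := by positivity
      rw [← intervalIntegral.integral_add_adjacent_intervals
        (hii 0 (((m + 1 : ℕ) : ℝ) * h) le_rfl hm0 (by linarith))
        (hii (((m + 1 : ℕ) : ℝ) * h) ((((m + 1 : ℕ) : ℝ) + 1) * h) hm0 (by linarith) hm1)]
      rw [show (m : ℝ) + 1 = ((m + 1 : ℕ) : ℝ) by push_cast; ring] at i1
      have : 32 * K1 * h ^ 3 * ((((m + 1 : ℕ) : ℝ) + 1) * h)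
        = 32 * K1 * h ^ 3 * (((m + 1 : ℕ) : ℝ) * h) + 32 * K1 * h ^ 3 * h := by ring
      rw [this]
      refine le_trans (le_of_eq_of_le ?_ (abs_add_le _ _)) (add_le_add i1 i2)
      congr 1
      ring
  have hR := (hsplit (k + 2) le_rfl).trans
    (mul_le_mul_of_nonneg_left hnT (by positivity : 0 ≤ 32 * K1 * h ^ 3))
  have hex := hint ((((k + 2 : ℕ) : ℝ) + 1) * h) ⟨by positivity, hnT⟩
  change _ = _ + _ + β * (∫ s in (0 : ℝ)..((((k + 2 : ℕ) : ℝ) + 1) * h), y s * w s) at hex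
  set I := ∫ s in (0 : ℝ)..((((k + 2 : ℕ) : ℝ) + 1) * h), y s * w s with hI
  clear_value I
  -- third difference
  have hD := aux_third _ K2 T ((k : ℝ) * h) h hpos (by positivity)
    (by push_cast at hnT; linarith) hF3
  rw [show (k : ℝ) * h + 3 * h = (((k + 2 : ℕ) : ℝ) + 1) * h by push_cast; ring,
    show (k : ℝ) * h + 2 * h = ((k + 2 : ℕ) : ℝ) * h by push_cast; ring,
    show (k : ℝ) * h + h = ((k + 1 : ℕ) : ℝ) * h by push_cast; ring] at hD
  -- Lipschitz
  have hLip : ∀ j : ℕ, j ≤ k + 2 →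
      |f ((j : ℝ) * h) (y ((j : ℝ) * h)) - f ((j : ℝ) * h) (yseq j)|
        ≤ L * |y ((j : ℝ) * h) - yseq j| := fun j hj =>
    hf _ ⟨by positivity, by linarith [(hjn j hj).trans hnT, hlen j]⟩ _ _
  have l0 := hLip k (by omega)
  have l1 := hLip (k + 1) (by omega)
  have l2 := hLip (k + 2) (by omega)
  have hS := aux_sum_bound (fun j => y ((j : ℝ) * h) - yseq j) (quadA0 β h (k + 2))
    (quadA1 β h (k + 2)) (quadA2 β h (k + 2)) (quadA20 β h (k + 2)) h
    (by simp [hy0, hy00]) (k + 1) hA0 hA1 hA2 hA20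
  have hAn := hA2 (k + 2) (by omega) le_rfl
  rw [show k + 2 - 2 = k by omega, show k + 2 - 1 = k + 1 by omega] at *
  rw [show k + 1 + 1 = k + 2 by omega] at hS
  rw [Finset.sum_Icc_succ_top (by omega : 1 ≤ k + 1 + 1)] at hR
  simp only [Nat.add_sub_cancel] at hR
  have hhalf : |quadA10 β h (k + 2) * (y (h / 2) - yhalf)| ≤ h * |y (h / 2) - yhalf| := by
    rw [abs_mul]; exact mul_le_mul_of_nonneg_right hA10 (abs_nonneg _)
  have hsumeq : ∑ j ∈ Finset.Icc 1 (k + 1),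
      (quadA0 β h (k + 2) j * (y (((j - 1 : ℕ) : ℝ) * h) - yseq (j - 1))
        + quadA1 β h (k + 2) j * (y ((j : ℝ) * h) - yseq j)
        + quadA2 β h (k + 2) j * (y (((j + 1 : ℕ) : ℝ) * h) - yseq (j + 1)))
      = ∑ j ∈ Finset.Icc 1 (k + 1), (quadA0 β h (k + 2) j * y (((j - 1 : ℕ) : ℝ) * h)
          + quadA1 β h (k + 2) j * y ((j : ℝ) * h)
          + quadA2 β h (k + 2) j * y (((j + 1 : ℕ) : ℝ) * h))
        - ∑ j ∈ Finset.Icc 1 (k + 1), (quadA0 β h (k + 2) j * yseq (j - 1)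
          + quadA1 β h (k + 2) j * yseq j + quadA2 β h (k + 2) j * yseq (j + 1)) := by
    rw [← Finset.sum_sub_distrib]
    exact Finset.sum_congr rfl fun j _ => by ring
  rw [hsumeq] at hS
  rw [show (((k + 1 + 1 + 1 : ℕ)) : ℝ) = ((k + 2 : ℕ) : ℝ) + 1 by push_cast; ring,
    show k + 1 + 1 = k + 2 by omega] at hR
  rw [show (((1 : ℕ)) : ℝ) * h = h by simp] at hS
  rw [show 2 * L * (1 - α) / M = 2 * L * c by rw [hc]; ring]
  generalize (∑ j ∈ Finset.Icc 1 (k + 1), (quadA0 β h (k + 2) j * y (((j - 1 : ℕ) : ℝ) * h)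
          + quadA1 β h (k + 2) j * y ((j : ℝ) * h)
          + quadA2 β h (k + 2) j * y (((j + 1 : ℕ) : ℝ) * h))) = Sy at hS hR
  generalize (∑ j ∈ Finset.Icc 1 (k + 1), (quadA0 β h (k + 2) j * yseq (j - 1)
          + quadA1 β h (k + 2) j * yseq j + quadA2 β h (k + 2) j * yseq (j + 1))) = Ss at hS hpred
  generalize (∑ j ∈ Finset.Icc 1 (k + 2), |y ((j : ℝ) * h) - yseq j|) = SE at hS ⊢
  rw [hy00] at hpred
  rw [hy0] at hR
  clear hsplit hRj hA0 hA1 hA2 hLip hjn hlen hbas hbas0 hw hwc hsumeq hint hf hy3 hF3 hyc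
  set Ep := y ((((k + 2 : ℕ) : ℝ) + 1) * h) - yp (k + 2 + 1) with hEp
  have hEq : (1 - β * quadA2 β h (k + 2) (k + 2)) * Ep = c * ((f ((((k + 2 : ℕ) : ℝ) + 1) * h) (y ((((k + 2 : ℕ) : ℝ) + 1) * h)) - (f ((k : ℝ) * h) (y ((k : ℝ) * h)) - 3 * f (((k + 1 : ℕ) : ℝ) * h) (y (((k + 1 : ℕ) : ℝ) * h)) + 3 * f (((k + 2 : ℕ) : ℝ) * h) (y (((k + 2 : ℕ) : ℝ) * h)))) + (f ((k : ℝ) * h) (y ((k : ℝ) * h)) - f ((k : ℝ) * h) (yseq k)) - 3 * (f (((k + 1 : ℕ) : ℝ) * h) (y (((k + 1 : ℕ) : ℝ) * h)) - f (((k + 1 : ℕ) : ℝ) * h) (yseq (k + 1))) + 3 * (f (((k + 2 : ℕ) : ℝ) * h) (y (((k + 2 : ℕ) : ℝ) * h)) - f (((k + 2 : ℕ) : ℝ) * h) (yseq (k + 2))))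
      + β * (quadA10 β h (k + 2) * (y (h / 2) - yhalf))
      + β * (Sy - Ss + quadA0 β h (k + 2) (k + 2) * (y (((k + 1 : ℕ) : ℝ) * h) - yseq (k + 1))
        + quadA1 β h (k + 2) (k + 2) * (y (((k + 2 : ℕ) : ℝ) * h) - yseq (k + 2))
        + quadA20 β h (k + 2) * (y h - yseq 1))
      + β * (I - ((quadA00 β h (k + 2) * y₀ + quadA10 β h (k + 2) * y (h / 2)
        + quadA20 β h (k + 2) * y h) + (Sy + (quadA0 β h (k + 2) (k + 2) * y (((k + 1 : ℕ) : ℝ) * h) + quadA1 β h (k + 2) (k + 2) * y (((k + 2 : ℕ) : ℝ) * h) + quadA2 β h (k + 2) (k + 2) * y ((((k + 2 : ℕ) : ℝ) + 1) * h))))) := by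
    rw [hEp, mul_sub, hpred]
    linear_combination hex
  have hlow : |Ep| ≤ 2 * |(1 - β * quadA2 β h (k + 2) (k + 2)) * Ep| := by
    rw [abs_mul]
    have a1 : β * quadA2 β h (k + 2) (k + 2) ≤ β * h :=
      mul_le_mul_of_nonneg_left (abs_le.1 hAn).2 hβ0.le
    have a2 : 1 / 2 ≤ |1 - β * quadA2 β h (k + 2) (k + 2)| :=
      le_trans (by linarith) (le_abs_self _)
    have := mul_le_mul_of_nonneg_right a2 (abs_nonneg Ep)
    linarith
  refine hlow.trans ?_
  rw [hEq]
  have b1 : ∀ d x0 x1 x2 D e0 e1 e2 : ℝ, |d| ≤ D → |x0| ≤ e0 → |x1| ≤ e1 → |x2| ≤ e2 →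
      |d + x0 - 3 * x1 + 3 * x2| ≤ D + e0 + 3 * e1 + 3 * e2 := by
    intro d x0 x1 x2 D e0 e1 e2 g0 g1 g2 g3
    rw [abs_le] at *
    constructor <;> linarith [g0.1, g0.2, g1.1, g1.2, g2.1, g2.2, g3.1, g3.2]
  have b2 : ∀ r x X : ℝ, 0 ≤ r → |x| ≤ X → |r * x| ≤ r * X := fun r x X hr hx => by
    rw [abs_mul, abs_of_nonneg hr]; exact mul_le_mul_of_nonneg_left hx hr
  have t1 := b2 c _ _ hc0 (b1 _ _ _ _ _ _ _ _ hD l0 l1 l2)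
  have t2 := b2 β _ _ hβ0.le hhalf
  have t3 := b2 β _ _ hβ0.le hS
  have t4 := b2 β _ _ hβ0.le hR
  refine (mul_le_mul_of_nonneg_left ((abs_add_le _ _).trans (add_le_add ((abs_add_le _ _).trans
    (add_le_add ((abs_add_le _ _).trans (add_le_add t1 t2)) t3)) t4)) zero_le_two).trans
    (le_of_eq ?_)
  ring
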